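/- For all real numbers a, b, α, β with (a,b) ≠ (0,0), writing s = a² + b², one has E₂(a/s, b/s, −α, β) = s⁻⁶·E₂(a, b, α, β). In particular the zero set of E₂ is invariant under the transformation (a, b, α, β) ↦ (a/(a²+b²), b/(a²+b²), −α, β). -/

import Mathlib

/-- The real part of the equation cutting out the discriminant locus of the Fermat
cubic, in coordinates `x₁ = a cos α`, `x₂ = a sin α`, `x₃ = b cos β`, `x₄ = b sin β`. -/
noncomputable def E₂ (a b α β : ℝ) : ℝ :=
  1 + 4 * a ^ 6 - 4 * b ^ 6 + 6 * a ^ 4 * b ^ 2 - 6 * a ^ 2 * b ^ 4 +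
    (a ^ 12 + 6 * a ^ 10 * b ^ 2 + 15 * a ^ 8 * b ^ 4 + 20 * a ^ 6 * b ^ 6 +
      15 * a ^ 4 * b ^ 8 + 6 * a ^ 2 * b ^ 10 + b ^ 12) +
    2 * b ^ 6 * Real.sin (6 * β) + 2 * a ^ 6 * Real.cos (6 * α) +
    4 * a ^ 3 * (1 + a ^ 6 + b ^ 6 + 3 * a ^ 4 * b ^ 2 + 3 * a ^ 2 * b ^ 4) * Real.cos (3 * α)

lemma sq_add_sq_ne_zero_of_pair_ne_zero {R : Type*} [CommRing R] [LinearOrder R]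
    [IsStrictOrderedRing R] {a b : R} (h : (a, b) ≠ (0, 0)) : a ^ 2 + b ^ 2 ≠ 0 := by
  simpa only [sq, ne_eq, mul_self_add_mul_self_eq_zero, Prod.mk.injEq] using h

lemma div_sq_add_div_sq_eq_inv {K : Type*} [Semifield K] (a b : K) :
    (a / (a ^ 2 + b ^ 2)) ^ 2 + (b / (a ^ 2 + b ^ 2)) ^ 2 = (a ^ 2 + b ^ 2)⁻¹ := by
  rw [div_pow, div_pow, ← add_div, sq (a ^ 2 + b ^ 2), div_self_mul_self']

lemma one_add_inv_pow {K : Type*} [DivisionSemiring K] {s : K} (hs : s ≠ 0) (n : ℕ) :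
    1 + s⁻¹ ^ n = s⁻¹ ^ n * (1 + s ^ n) := by
  rw [mul_add, mul_one, inv_pow, inv_mul_cancel₀ (pow_ne_zero n hs), add_comm]

namespace E₂

/-- The part of `E₂` that is homogeneous of degree `6` in the radii `(a, b)`. Together with the
cubic `a ^ 3 * cos (3 * α)` and the squared radius `a ^ 2 + b ^ 2` it determines `E₂`. -/
noncomputable def sextic (a b α β : ℝ) : ℝ :=
  4 * a ^ 6 - 4 * b ^ 6 + 6 * a ^ 4 * b ^ 2 - 6 * a ^ 2 * b ^ 4 +
    2 * b ^ 6 * Real.sin (6 * β) + 2 * a ^ 6 * Real.cos (6 * α)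

lemma sextic_mul_mul (t a b α β : ℝ) :
    sextic (t * a) (t * b) α β = t ^ 6 * sextic a b α β := by
  unfold sextic
  ring

lemma eq_add_sextic (a b α β : ℝ) :
    E₂ a b α β = (1 + (a ^ 2 + b ^ 2) ^ 6) +
      4 * (1 + (a ^ 2 + b ^ 2) ^ 3) * (a ^ 3 * Real.cos (3 * α)) + sextic a b α β := by
  unfold E₂ sextic
  ring

lemma neg_alpha (a b α β : ℝ) : E₂ a b (-α) β = E₂ a b α β := by
  simp only [E₂, mul_neg, Real.cos_neg]

-- Inversion replaces `s = a ^ 2 + b ^ 2` by `s⁻¹`, and each of the three summands of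
-- `eq_add_sextic` is multiplied by `s⁻¹ ^ 6`: the first since `1 + s ^ 6` is palindromic, the
-- second since `1 + s ^ 3` and the cubic contribute `s⁻¹ ^ 3` each, the third by homogeneity.
lemma inversion {a b : ℝ} (hs : a ^ 2 + b ^ 2 ≠ 0) (α β : ℝ) :
    E₂ (a / (a ^ 2 + b ^ 2)) (b / (a ^ 2 + b ^ 2)) α β =
      ((a ^ 2 + b ^ 2) ^ 6)⁻¹ * E₂ a b α β := by
  rw [eq_add_sextic, div_sq_add_div_sq_eq_inv, eq_add_sextic a b]
  generalize a ^ 2 + b ^ 2 = s at hs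
  rw [one_add_inv_pow hs 6, one_add_inv_pow hs 3, div_eq_inv_mul a, div_eq_inv_mul b,
    sextic_mul_mul]
  ring

end E₂

/-- For `(a,b) ≠ (0,0)` and `s = a² + b²` one has
`E₂(a/s, b/s, −α, β) = s⁻⁶·E₂(a, b, α, β)`; in particular the zero set of `E₂` is
invariant under `(a, b, α, β) ↦ (a/(a²+b²), b/(a²+b²), −α, β)`. -/
theorem E₂_inversion_neg_alpha (a b α β : ℝ) (h : (a, b) ≠ (0, 0)) :
    E₂ (a / (a ^ 2 + b ^ 2)) (b / (a ^ 2 + b ^ 2)) (-α) β =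
      ((a ^ 2 + b ^ 2) ^ 6)⁻¹ * E₂ a b α β ∧
    (E₂ a b α β = 0 → E₂ (a / (a ^ 2 + b ^ 2)) (b / (a ^ 2 + b ^ 2)) (-α) β = 0) := by
  have transform : E₂ (a / (a ^ 2 + b ^ 2)) (b / (a ^ 2 + b ^ 2)) (-α) β =
      ((a ^ 2 + b ^ 2) ^ 6)⁻¹ * E₂ a b α β := by
    rw [E₂.neg_alpha, E₂.inversion (sq_add_sq_ne_zero_of_pair_ne_zero h)]
  exact ⟨transform, fun hE ↦ by rw [transform, hE, mul_zero]⟩
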